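/- For real parameters θ¹, θ² with θ¹+θ² > 0 and θ¹−θ² > 0, the covariance of log(sech X) and X under the beta-logistic distribution is ∫_{ℝ} (log(sech x) − m)·(x − μ) · p(x;θ¹,θ²) dx = (1/4)·(ψ'((θ¹+θ²)/2) − ψ'((θ¹−θ²)/2)), where μ = (1/2)(ψ((θ¹+θ²)/2) − ψ((θ¹−θ²)/2)) and m = (1/2)ψ((θ¹−θ²)/2) + (1/2)ψ((θ¹+θ²)/2) − ψ(θ¹) + log 2. This is the off-diagonal entry g₁₂ of the Fisher information matrix of the family. -/

import Mathlib

open MeasureTheory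

/-- The hyperbolic secant function: `sech x = 2 / (eˣ + e⁻ˣ)`. -/
noncomputable def sech (x : ℝ) : ℝ := 1 / Real.cosh x

/-- The beta-logistic density. -/
noncomputable def betaLogisticPDF (θ1 θ2 x : ℝ) : ℝ :=
  (2 : ℝ) ^ (1 - θ1) * sech x ^ θ1 * Real.exp (θ2 * x) /
    (Real.Gamma ((θ1 - θ2) / 2) * Real.Gamma ((θ1 + θ2) / 2) / Real.Gamma θ1)

/-- The digamma function `ψ(z) = d/dz log Γ(z)`. -/
noncomputable def digamma (z : ℝ) : ℝ := deriv (fun x => Real.log (Real.Gamma x)) z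

/-- The trigamma function `ψ'(z) = d²/dz² log Γ(z)`. -/
noncomputable def trigamma (z : ℝ) : ℝ := iteratedDeriv 2 (fun x => Real.log (Real.Gamma x)) z

lemma sech_pos (x : ℝ) : 0 < sech x := by
  unfold sech; have := Real.cosh_pos x; positivity

lemma sech_neg (x : ℝ) : sech (-x) = sech x := by simp [sech]

lemma continuous_sech : Continuous sech := by
  unfold sech
  exact continuous_const.div Real.continuous_cosh (fun x => (Real.cosh_pos x).ne')

lemma sigmoid_two_mul (x : ℝ) : Real.sigmoid (2 * x) = sech x / 2 * Real.exp x := by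
  rw [Real.sigmoid_def, sech, Real.cosh_eq]
  have h1 : Real.exp (-(2 * x)) = Real.exp (-x) * Real.exp (-x) := by
    rw [← Real.exp_add]; ring_nf
  have h2 : Real.exp x * Real.exp (-x) = 1 := by rw [← Real.exp_add]; simp
  have := Real.exp_pos x
  have := Real.exp_pos (-x)
  rw [h1]
  field_simp
  nlinarith

lemma one_sub_sigmoid_two_mul (x : ℝ) :
    1 - Real.sigmoid (2 * x) = sech x / 2 * Real.exp (-x) := by
  rw [← Real.sigmoid_neg, ← sech_neg x, ← sigmoid_two_mul]; ring_nf

lemma integral_beta_Ioo {a b : ℝ} (ha : 0 < a) (hb : 0 < b) :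
    ∫ y in Set.Ioo (0 : ℝ) 1, y ^ (a - 1) * (1 - y) ^ (b - 1) =
      Real.Gamma a * Real.Gamma b / Real.Gamma (a + b) := by
  have h := ProbabilityTheory.lintegral_betaPDF_eq_one ha hb
  have hB := ProbabilityTheory.beta_pos ha hb
  rw [ProbabilityTheory.lintegral_betaPDF, ← ENNReal.toReal_eq_one_iff,
    ← integral_eq_lintegral_of_nonneg_ae] at h
  · simp_rw [mul_assoc, integral_const_mul] at h
    change _ = ProbabilityTheory.beta a b
    field_simp at h
    exact h
  · refine (ae_restrict_iff' measurableSet_Ioo).2 (Filter.Eventually.of_forall fun x hx => ?_)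
    have h1 := hx.1
    have h2 : 0 < 1 - x := by linarith [hx.2]
    simp only [Pi.zero_apply]
    positivity
  · exact Measurable.aestronglyMeasurable (by fun_prop)

lemma integral_kernel {s t : ℝ} (h1 : 0 < s + t) (h2 : 0 < s - t) :
    ∫ x : ℝ, sech x ^ s * Real.exp (t * x) =
      2 ^ (s - 1) * (Real.Gamma ((s - t) / 2) * Real.Gamma ((s + t) / 2) / Real.Gamma s) := by
  have hb : 0 < (s + t) / 2 := by linarith
  have ha : 0 < (s - t) / 2 := by linarith
  have key := integral_beta_Ioo hb ha
  have himg : (fun x : ℝ => Real.sigmoid (2 * x)) '' Set.univ = Set.Ioo 0 1 := by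
    rw [Set.image_univ, ← Real.range_sigmoid]
    exact (mul_left_surjective₀ (two_ne_zero)).range_comp Real.sigmoid
  rw [← himg, integral_image_eq_integral_abs_deriv_smul MeasurableSet.univ
    (f' := fun x => Real.sigmoid (2 * x) * (1 - Real.sigmoid (2 * x)) * 2)] at key
  · rw [setIntegral_univ] at key
    have hfun : ∀ x : ℝ, |Real.sigmoid (2 * x) * (1 - Real.sigmoid (2 * x)) * 2| •
        (Real.sigmoid (2 * x) ^ ((s + t) / 2 - 1) *
          (1 - Real.sigmoid (2 * x)) ^ ((s - t) / 2 - 1)) =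
        2 ^ (1 - s) * (sech x ^ s * Real.exp (t * x)) := by
      intro x
      have hp := Real.sigmoid_pos (2 * x)
      have hq : 0 < 1 - Real.sigmoid (2 * x) := by linarith [Real.sigmoid_lt_one (2 * x)]
      rw [abs_of_pos (by positivity), smul_eq_mul, Real.rpow_sub_one hp.ne',
        Real.rpow_sub_one hq.ne']
      have : Real.sigmoid (2 * x) * (1 - Real.sigmoid (2 * x)) * 2 *
          (Real.sigmoid (2 * x) ^ ((s + t) / 2) / Real.sigmoid (2 * x) *
          ((1 - Real.sigmoid (2 * x)) ^ ((s - t) / 2) / (1 - Real.sigmoid (2 * x)))) =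
          2 * (Real.sigmoid (2 * x) ^ ((s + t) / 2) *
            (1 - Real.sigmoid (2 * x)) ^ ((s - t) / 2)) := by
        field_simp
      rw [this, one_sub_sigmoid_two_mul, sigmoid_two_mul]
      have hs := sech_pos x
      rw [Real.mul_rpow (by positivity) (by positivity),
        Real.mul_rpow (by positivity) (by positivity), ← Real.exp_mul, ← Real.exp_mul]
      have e1 : (sech x / 2) ^ ((s + t) / 2) * (sech x / 2) ^ ((s - t) / 2) = (sech x / 2) ^ s := by
        rw [← Real.rpow_add (by positivity)]; ring_nf
      have e2 : Real.exp (x * ((s + t) / 2)) * Real.exp (-x * ((s - t) / 2)) =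
          Real.exp (t * x) := by
        rw [← Real.exp_add]; ring_nf
      have e3 : (2 : ℝ) ^ (1 - s) = 2 / 2 ^ s := by
        rw [Real.rpow_sub (by norm_num), Real.rpow_one]
      rw [e3, ← e2]
      calc _ = 2 * ((sech x / 2) ^ ((s + t) / 2) * (sech x / 2) ^ ((s - t) / 2)) *
            (Real.exp (x * ((s + t) / 2)) * Real.exp (-x * ((s - t) / 2))) := by ring
        _ = _ := by rw [e1, Real.div_rpow hs.le (by norm_num)]; ring
    simp_rw [hfun] at key
    rw [integral_const_mul] at key
    have e4 : (2 : ℝ) ^ (s - 1) * 2 ^ (1 - s) = 1 := by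
      rw [← Real.rpow_add (by norm_num)]; simp
    have e5 : (s + t) / 2 + (s - t) / 2 = s := by ring
    rw [e5] at key
    calc _ = (2 : ℝ) ^ (s - 1) * 2 ^ (1 - s) * ∫ x : ℝ, sech x ^ s * Real.exp (t * x) := by
          rw [e4, one_mul]
      _ = _ := by rw [mul_assoc, key]; ring
  · intro x _
    have h := (Real.hasDerivAt_sigmoid (2 * x)).comp x ((hasDerivAt_id x).const_mul 2)
    rw [mul_one] at h
    exact h.hasDerivWithinAt
  · intro x _ y _ hxy
    have := Real.sigmoid_injective hxy
    linarith

lemma integrable_kernel {s t : ℝ} (h1 : 0 < s + t) (h2 : 0 < s - t) :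
    Integrable (fun x : ℝ => sech x ^ s * Real.exp (t * x)) := by
  by_contra h
  have h0 := integral_kernel h1 h2
  rw [integral_undef h] at h0
  have := Real.Gamma_pos_of_pos (show 0 < (s + t) / 2 by linarith)
  have := Real.Gamma_pos_of_pos (show 0 < (s - t) / 2 by linarith)
  have := Real.Gamma_pos_of_pos (show 0 < s by linarith)
  have : 0 < (2 : ℝ) ^ (s - 1) * (Real.Gamma ((s - t) / 2) * Real.Gamma ((s + t) / 2) /
    Real.Gamma s) := by positivity
  linarith

lemma analyticAt_logGamma {z : ℝ} (hz : 0 < z) :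
    AnalyticAt ℝ (fun x => Real.log (Real.Gamma x)) z := by
  have hC : AnalyticAt ℂ Complex.Gamma (z : ℂ) := by
    apply DifferentiableOn.analyticAt (s := {w : ℂ | 0 < w.re})
    · intro w hw
      refine (Complex.differentiableAt_Gamma w fun n hn => ?_).differentiableWithinAt
      have : w.re ≤ 0 := by rw [hn]; simp
      have hw' : 0 < w.re := hw
      linarith
    · exact (isOpen_lt continuous_const Complex.continuous_re).mem_nhds (by simpa using hz)
  exact AnalyticAt.log (hC.re_ofReal) (Real.Gamma_pos_of_pos hz)

/-- The statistic `log sech x + x`. -/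
noncomputable def statX (x : ℝ) : ℝ := Real.log (sech x) + x

lemma pdf_nonneg {θ1 θ2 : ℝ} (h1 : 0 < θ1 + θ2) (h2 : 0 < θ1 - θ2) (x : ℝ) :
    0 ≤ betaLogisticPDF θ1 θ2 x := by
  have := Real.Gamma_pos_of_pos (show 0 < (θ1 + θ2) / 2 by linarith)
  have := Real.Gamma_pos_of_pos (show 0 < (θ1 - θ2) / 2 by linarith)
  have := Real.Gamma_pos_of_pos (show 0 < θ1 by linarith)
  have := sech_pos x
  unfold betaLogisticPDF
  positivity

lemma continuous_pdf (θ1 θ2 : ℝ) : Continuous (betaLogisticPDF θ1 θ2) := by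
  unfold betaLogisticPDF
  have : Continuous fun x => sech x ^ θ1 :=
    continuous_sech.rpow_const (fun x => Or.inl (sech_pos x).ne')
  fun_prop

lemma continuous_statX : Continuous statX := by
  unfold statX
  exact (continuous_sech.log (fun x => (sech_pos x).ne')).add continuous_id

/-- The probability measure with the beta-logistic density. -/
noncomputable def blMeasure (θ1 θ2 : ℝ) : Measure ℝ :=
  volume.withDensity (fun x => ENNReal.ofReal (betaLogisticPDF θ1 θ2 x))

lemma integral_blMeasure {θ1 θ2 : ℝ} (h1 : 0 < θ1 + θ2) (h2 : 0 < θ1 - θ2) (f : ℝ → ℝ) :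
    ∫ x, f x ∂(blMeasure θ1 θ2) = ∫ x, f x * betaLogisticPDF θ1 θ2 x := by
  unfold blMeasure
  rw [integral_withDensity_eq_integral_toReal_smul
    (continuous_pdf θ1 θ2).measurable.ennreal_ofReal
    (Filter.Eventually.of_forall fun x => ENNReal.ofReal_lt_top)]
  refine integral_congr_ae (Filter.Eventually.of_forall fun x => ?_)
  simp only [smul_eq_mul]
  rw [ENNReal.toReal_ofReal (pdf_nonneg h1 h2 x), mul_comm]

lemma integrable_blMeasure {θ1 θ2 : ℝ} (h1 : 0 < θ1 + θ2) (h2 : 0 < θ1 - θ2) (f : ℝ → ℝ) :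
    Integrable f (blMeasure θ1 θ2) ↔ Integrable (fun x => f x * betaLogisticPDF θ1 θ2 x) := by
  unfold blMeasure
  rw [integrable_withDensity_iff_integrable_smul'
    (continuous_pdf θ1 θ2).measurable.ennreal_ofReal
    (Filter.Eventually.of_forall fun x => ENNReal.ofReal_lt_top)]
  refine integrable_congr (Filter.Eventually.of_forall fun x => ?_)
  simp only [smul_eq_mul]
  rw [ENNReal.toReal_ofReal (pdf_nonneg h1 h2 x), mul_comm]

lemma exp_statX_mul_pdf (θ1 θ2 u x : ℝ) :
    Real.exp (u * statX x) * betaLogisticPDF θ1 θ2 x =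
      (2 ^ (1 - θ1) / (Real.Gamma ((θ1 - θ2) / 2) * Real.Gamma ((θ1 + θ2) / 2) / Real.Gamma θ1)) *
      (sech x ^ (θ1 + u) * Real.exp ((θ2 + u) * x)) := by
  unfold betaLogisticPDF statX
  have e1 : Real.exp (u * (Real.log (sech x) + x)) = sech x ^ u * Real.exp (u * x) := by
    rw [mul_add, Real.exp_add, Real.rpow_def_of_pos (sech_pos x), mul_comm u]
  rw [e1, Real.rpow_add (sech_pos x), add_mul, Real.exp_add]
  ring

lemma integrable_exp_statX {θ1 θ2 u : ℝ} (h1 : 0 < θ1 + θ2) (h2 : 0 < θ1 - θ2)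
    (hu : 0 < (θ1 + θ2) / 2 + u) :
    Integrable (fun x => Real.exp (u * statX x)) (blMeasure θ1 θ2) := by
  rw [integrable_blMeasure h1 h2]
  simp_rw [exp_statX_mul_pdf]
  exact (integrable_kernel (by linarith) (by linarith)).const_mul _

lemma mgf_statX {θ1 θ2 u : ℝ} (h1 : 0 < θ1 + θ2) (h2 : 0 < θ1 - θ2)
    (hu : 0 < (θ1 + θ2) / 2 + u) :
    ProbabilityTheory.mgf statX (blMeasure θ1 θ2) u =
      2 ^ u * (Real.Gamma ((θ1 + θ2) / 2 + u) / Real.Gamma ((θ1 + θ2) / 2)) *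
        (Real.Gamma θ1 / Real.Gamma (θ1 + u)) := by
  unfold ProbabilityTheory.mgf
  rw [integral_blMeasure h1 h2]
  simp_rw [exp_statX_mul_pdf]
  rw [integral_const_mul, integral_kernel (by linarith) (by linarith)]
  have e1 : (θ1 + u - (θ2 + u)) / 2 = (θ1 - θ2) / 2 := by ring
  have e2 : (θ1 + u + (θ2 + u)) / 2 = (θ1 + θ2) / 2 + u := by ring
  rw [e1, e2]
  have e3 : (2 : ℝ) ^ u = 2 ^ (1 - θ1) * 2 ^ (θ1 + u - 1) := by
    rw [← Real.rpow_add (by norm_num)]; ring_nf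
  rw [e3]
  have := Real.Gamma_pos_of_pos (show 0 < (θ1 + θ2) / 2 by linarith)
  have := Real.Gamma_pos_of_pos (show 0 < (θ1 - θ2) / 2 by linarith)
  have := Real.Gamma_pos_of_pos (show 0 < θ1 by linarith)
  have := Real.Gamma_pos_of_pos (show 0 < θ1 + u by linarith)
  field_simp

lemma eventually_ok {θ1 θ2 : ℝ} (h1 : 0 < θ1 + θ2) :
    ∀ᶠ u : ℝ in nhds 0, 0 < (θ1 + θ2) / 2 + u := by
  have : Filter.Tendsto (fun u : ℝ => (θ1 + θ2) / 2 + u) (nhds 0) (nhds ((θ1 + θ2) / 2 + 0)) :=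
    (continuous_const.add continuous_id).tendsto 0
  exact this.eventually_const_lt (by linarith)

lemma zero_mem_interior {θ1 θ2 : ℝ} (h1 : 0 < θ1 + θ2) (h2 : 0 < θ1 - θ2) :
    (0 : ℝ) ∈ interior (ProbabilityTheory.integrableExpSet statX (blMeasure θ1 θ2)) := by
  rw [mem_interior_iff_mem_nhds]
  filter_upwards [eventually_ok h1] with u hu
  exact integrable_exp_statX h1 h2 hu

lemma cgf_statX {θ1 θ2 : ℝ} (h1 : 0 < θ1 + θ2) (h2 : 0 < θ1 - θ2) :
    ProbabilityTheory.cgf statX (blMeasure θ1 θ2) =ᶠ[nhds 0] fun u =>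
      (u * Real.log 2 + (Real.log (Real.Gamma θ1) - Real.log (Real.Gamma ((θ1 + θ2) / 2)))) +
        (Real.log (Real.Gamma ((θ1 + θ2) / 2 + u)) - Real.log (Real.Gamma (θ1 + u))) := by
  filter_upwards [eventually_ok h1] with u hu
  unfold ProbabilityTheory.cgf
  rw [mgf_statX h1 h2 hu]
  have a1 := Real.Gamma_pos_of_pos (show 0 < (θ1 + θ2) / 2 by linarith)
  have a2 := Real.Gamma_pos_of_pos hu
  have a3 := Real.Gamma_pos_of_pos (show 0 < θ1 by linarith)
  have a4 := Real.Gamma_pos_of_pos (show 0 < θ1 + u by linarith)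
  rw [Real.log_mul (by positivity) (by positivity), Real.log_mul (by positivity) (by positivity),
    Real.log_rpow (by norm_num), Real.log_div a2.ne' a1.ne', Real.log_div a3.ne' a4.ne']
  ring

lemma hasDerivAt_logGamma {z : ℝ} (hz : 0 < z) :
    HasDerivAt (fun x => Real.log (Real.Gamma x)) (digamma z) z :=
  (analyticAt_logGamma hz).differentiableAt.hasDerivAt

lemma hasDerivAt_digamma {z : ℝ} (hz : 0 < z) : HasDerivAt digamma (trigamma z) z := by
  have h : trigamma z = deriv digamma z := by
    unfold trigamma
    rw [iteratedDeriv_succ, iteratedDeriv_one]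
    rfl
  rw [h]
  exact (analyticAt_logGamma hz).deriv.differentiableAt.hasDerivAt

lemma deriv_cgf_statX {θ1 θ2 : ℝ} (h1 : 0 < θ1 + θ2) (h2 : 0 < θ1 - θ2) :
    deriv (ProbabilityTheory.cgf statX (blMeasure θ1 θ2)) =ᶠ[nhds 0] fun u =>
      Real.log 2 + (digamma ((θ1 + θ2) / 2 + u) - digamma (θ1 + u)) := by
  filter_upwards [(cgf_statX h1 h2).eventually_nhds, eventually_ok h1] with u hc hu
  rw [Filter.EventuallyEq.deriv_eq hc]
  have d1 := (hasDerivAt_logGamma hu).comp_const_add ((θ1 + θ2) / 2) u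
  have d2 := (hasDerivAt_logGamma (show 0 < θ1 + u by linarith)).comp_const_add θ1 u
  have d3 := ((hasDerivAt_id u).mul_const (Real.log 2)).add_const
    (Real.log (Real.Gamma θ1) - Real.log (Real.Gamma ((θ1 + θ2) / 2)))
  have := (d3.add (d1.sub d2)).deriv
  rw [one_mul] at this
  exact this

lemma variance_statX {θ1 θ2 : ℝ} (h1 : 0 < θ1 + θ2) (h2 : 0 < θ1 - θ2) :
    ∫ x, (statX x - (Real.log 2 + (digamma ((θ1 + θ2) / 2) - digamma θ1))) ^ 2 *
        betaLogisticPDF θ1 θ2 x = trigamma ((θ1 + θ2) / 2) - trigamma θ1 := by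
  have h := ProbabilityTheory.iteratedDeriv_two_cgf_eq_integral (zero_mem_interior h1 h2)
  have hd0 := (deriv_cgf_statX h1 h2).eq_of_nhds
  have hm : ProbabilityTheory.mgf statX (blMeasure θ1 θ2) 0 = 1 := by
    rw [mgf_statX h1 h2 (by linarith)]
    have a1 := Real.Gamma_pos_of_pos (show 0 < (θ1 + θ2) / 2 by linarith)
    have a3 := Real.Gamma_pos_of_pos (show 0 < θ1 by linarith)
    simp [a1.ne', a3.ne']
  rw [hm, hd0, iteratedDeriv_succ, iteratedDeriv_one,
    (deriv_cgf_statX h1 h2).deriv_eq] at h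
  have hb : 0 < (θ1 + θ2) / 2 + 0 := by linarith
  have d1 := (hasDerivAt_digamma hb).comp_const_add ((θ1 + θ2) / 2) 0
  have d2 := (hasDerivAt_digamma (show 0 < θ1 + 0 by linarith)).comp_const_add θ1 0
  have d := ((d1.sub d2).const_add (Real.log 2)).deriv
  rw [integral_blMeasure h1 h2] at h
  simp only [Pi.sub_apply] at d
  rw [d] at h
  simpa using h.symm

lemma integrable_statX_sq {θ1 θ2 : ℝ} (h1 : 0 < θ1 + θ2) (h2 : 0 < θ1 - θ2) (c : ℝ) :
    Integrable (fun x => (statX x - c) ^ 2 * betaLogisticPDF θ1 θ2 x) := by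
  rw [← integrable_blMeasure h1 h2 (fun x => (statX x - c) ^ 2)]
  have i0 := ProbabilityTheory.integrable_pow_of_mem_interior_integrableExpSet
    (zero_mem_interior h1 h2) 0
  have i1 := ProbabilityTheory.integrable_pow_of_mem_interior_integrableExpSet
    (zero_mem_interior h1 h2) 1
  have i2 := ProbabilityTheory.integrable_pow_of_mem_interior_integrableExpSet
    (zero_mem_interior h1 h2) 2
  refine ((i2.sub (i1.const_mul (2 * c))).add (i0.const_mul (c ^ 2))).congr
    (Filter.Eventually.of_forall fun x => ?_)
  simp
  ring

lemma pdf_neg (θ1 θ2 x : ℝ) : betaLogisticPDF θ1 (-θ2) (-x) = betaLogisticPDF θ1 θ2 x := by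
  unfold betaLogisticPDF
  rw [sech_neg]
  have e1 : (θ1 - -θ2) / 2 = (θ1 + θ2) / 2 := by ring
  have e2 : (θ1 + -θ2) / 2 = (θ1 - θ2) / 2 := by ring
  rw [e1, e2, neg_mul_neg, mul_comm (Real.Gamma ((θ1 + θ2) / 2))]

/-- The covariance of `log(sech X)` and `X` under the beta-logistic distribution is
`(1/4)(ψ'((θ¹+θ²)/2) − ψ'((θ¹−θ²)/2))`.  This is the Fisher metric entry `g₁₂`. -/
theorem betaLogistic_covariance (θ1 θ2 μ m : ℝ) (h1 : 0 < θ1 + θ2) (h2 : 0 < θ1 - θ2)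
    (hμ : μ = (1 / 2) * (digamma ((θ1 + θ2) / 2) - digamma ((θ1 - θ2) / 2)))
    (hm : m = (1 / 2) * digamma ((θ1 - θ2) / 2) + (1 / 2) * digamma ((θ1 + θ2) / 2) -
      digamma θ1 + Real.log 2) :
    (∫ x : ℝ, (Real.log (sech x) - m) * (x - μ) * betaLogisticPDF θ1 θ2 x) =
      (1 / 4) * (trigamma ((θ1 + θ2) / 2) - trigamma ((θ1 - θ2) / 2)) := by
  have h1' : 0 < θ1 + -θ2 := by linarith
  have h2' : 0 < θ1 - -θ2 := by linarith
  have va := variance_statX h1 h2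
  have vb := variance_statX h1' h2'
  have ia := integrable_statX_sq h1 h2
    (Real.log 2 + (digamma ((θ1 + θ2) / 2) - digamma θ1))
  have ib := (integrable_statX_sq h1' h2'
    (Real.log 2 + (digamma ((θ1 + -θ2) / 2) - digamma θ1))).comp_neg
  rw [← integral_neg_eq_self] at vb
  simp only [pdf_neg] at vb ib
  have e2 : (θ1 + -θ2) / 2 = (θ1 - θ2) / 2 := by ring
  rw [e2] at vb ib
  calc _ = ∫ x : ℝ, (1 / 4) *
        ((statX x - (Real.log 2 + (digamma ((θ1 + θ2) / 2) - digamma θ1))) ^ 2 *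
          betaLogisticPDF θ1 θ2 x -
        (statX (-x) - (Real.log 2 + (digamma ((θ1 - θ2) / 2) - digamma θ1))) ^ 2 *
          betaLogisticPDF θ1 θ2 x) := by
        refine integral_congr_ae (Filter.Eventually.of_forall fun x => ?_)
        simp only [statX, sech_neg, hμ, hm]
        ring
    _ = _ := by
        rw [integral_const_mul, integral_sub ia ib, va, vb]
        ring
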